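/- Let 0 < k < r be integers and W^r_{∞,∞} = {f ∈ L^r_{∞,∞} : M_r(f) ≤ 1}. Then for every δ > 0, ω(D^k, W^r_{∞,∞}; δ) = (‖φ_{r−k}‖ / ‖φ_r‖^{1−k/r}) · δ^{1−k/r}. -/

import Mathlib

open MeasureTheory Filter

noncomputable section

/-- The uniform norm `‖f‖ = sup_{t ∈ ℝ} |f t|` of a function `f : ℝ → ℝ`. -/
def unif (f : ℝ → ℝ) : ℝ := ⨆ t : ℝ, |f t|

/-- `M k f = ‖f⁽ᵏ⁾‖`, the uniform norm of the `k`-th derivative of `f`. -/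
def M (k : ℕ) (f : ℝ → ℝ) : ℝ := unif (iteratedDeriv k f)

/-- The class `L^r_{∞,∞}`: bounded functions `f : ℝ → ℝ` having `r-1` (continuous)
derivatives, with `f⁽ʳ⁻¹⁾` locally absolutely continuous and `f⁽ʳ⁾` essentially bounded;
the last two conditions are equivalent to `f⁽ʳ⁻¹⁾` being Lipschitz. -/
def MemL (r : ℕ) (f : ℝ → ℝ) : Prop :=
  Continuous f ∧ (∃ C : ℝ, ∀ t : ℝ, |f t| ≤ C) ∧ ContDiff ℝ (r - 1 : ℕ) f ∧
    ∃ K : NNReal, LipschitzWith K (iteratedDeriv (r - 1) f)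

/-- The Euler perfect spline `φ_r`: the `r`-th `2π`-periodic antiderivative with zero
mean value of `t ↦ sgn (sin t)`. -/
def eulerPhi : ℕ → ℝ → ℝ
  | 0 => fun t => Real.sign (Real.sin t)
  | (s + 1) => fun t =>
      (∫ x in (0:ℝ)..t, eulerPhi s x) -
        (1 / (2 * Real.pi)) * ∫ x in (0:ℝ)..(2 * Real.pi), ∫ u in (0:ℝ)..x, eulerPhi s u

/-- `φ_{λ,r}(t) = λ^{-r} φ_r (λ t)`. -/
def eulerPhiL (lam : ℝ) (r : ℕ) (t : ℝ) : ℝ := lam ^ (-(r : ℤ)) * eulerPhi r (lam * t)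

/-- The basic step function: `0` on `[0,a]`, `1` on `(a, a+b]`, `0` after `a+b`. -/
def psiBase (a b : ℝ) (t : ℝ) : ℝ := if t ≤ a then 0 else if t ≤ a + b then 1 else 0

/-- `psiBase` continued evenly with respect to the point `a+b+c`. -/
def psiHalf (a b c t : ℝ) : ℝ :=
  if t ≤ a + b + c then psiBase a b t else psiBase a b (2 * (a + b + c) - t)

/-- The Rodov step function `ψ_0(a,b,c)`: equal to `psiBase` on `[0, a+b+c]`, continued
evenly with respect to `a+b+c`, then oddly with respect to `2(a+b+c)`, then
`4(a+b+c)`-periodically. -/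
def psiZero (a b c t : ℝ) : ℝ :=
  if (t - 4 * (a + b + c) * ⌊t / (4 * (a + b + c))⌋) ≤ 2 * (a + b + c) then
    psiHalf a b c (t - 4 * (a + b + c) * ⌊t / (4 * (a + b + c))⌋)
  else
    -psiHalf a b c (4 * (a + b + c) - (t - 4 * (a + b + c) * ⌊t / (4 * (a + b + c))⌋))

/-- `ψ_s(a,b,c)`: the `s`-th periodic antiderivative of `ψ_0(a,b,c)` with zero mean
value over the period `[0, 4(a+b+c)]`. -/
def psi : ℕ → ℝ → ℝ → ℝ → ℝ → ℝ
  | 0 => psiZero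
  | (s + 1) => fun a b c t =>
      (∫ x in (0:ℝ)..t, psi s a b c x) -
        (1 / (4 * (a + b + c))) *
          ∫ x in (0:ℝ)..(4 * (a + b + c)), ∫ u in (0:ℝ)..x, psi s a b c u

/-- The modulus of continuity `ω(D^k, X; δ) = sup {‖f⁽ᵏ⁾‖ : f ∈ X, ‖f‖ ≤ δ}` of the
differentiation operator `D^k` on a class `X`. -/
def omegaMod (k : ℕ) (X : Set (ℝ → ℝ)) (δ : ℝ) : ℝ :=
  sSup {y : ℝ | ∃ f ∈ X, M 0 f ≤ δ ∧ M k f = y}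

end

lemma e0_meas : Measurable (eulerPhi 0) := by
  have h : Measurable Real.sign := by
    unfold Real.sign
    exact Measurable.ite measurableSet_Iio measurable_const
      (Measurable.ite measurableSet_Ioi measurable_const measurable_const)
  exact h.comp Real.measurable_sin

lemma e0_le (t : ℝ) : |eulerPhi 0 t| ≤ 1 := by
  change |Real.sign (Real.sin t)| ≤ 1
  rcases Real.sign_apply_eq (Real.sin t) with h | h | h <;> rw [h] <;> norm_num

lemma e0_int (a b : ℝ) : IntervalIntegrable (eulerPhi 0) volume a b := by
  refine (intervalIntegrable_const (c := (1:ℝ))).mono_fun e0_meas.aestronglyMeasurable ?_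
  filter_upwards with t
  simpa using e0_le t

lemma e_aux (n : ℕ) (hi : ∀ a b, IntervalIntegrable (eulerPhi n) volume a b)
    (ha : ∀ t, eulerPhi n (t + Real.pi) = - eulerPhi n t) :
    (∀ t, eulerPhi (n+1) t = (∫ x in (0:ℝ)..t, eulerPhi n x)
      - (1/2) * ∫ x in (0:ℝ)..Real.pi, eulerPhi n x) ∧
    Continuous (eulerPhi (n+1)) ∧ (∀ t, eulerPhi (n+1) (t + Real.pi) = - eulerPhi (n+1) t) := by
  set F : ℝ → ℝ := fun t => ∫ x in (0:ℝ)..t, eulerPhi n x with hF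
  have hFc : Continuous F := intervalIntegral.continuous_primitive hi 0
  have hFa : ∀ t, F (t + Real.pi) = F Real.pi - F t := by
    intro t
    have h1 : F (t + Real.pi) = F Real.pi + ∫ x in (Real.pi)..(t + Real.pi), eulerPhi n x :=
      (intervalIntegral.integral_add_adjacent_intervals (hi _ _) (hi _ _)).symm
    have h2 : ∫ x in (0:ℝ)..t, eulerPhi n (x + Real.pi) =
        ∫ x in (0 + Real.pi)..(t + Real.pi), eulerPhi n x :=
      intervalIntegral.integral_comp_add_right _ _
    rw [zero_add] at h2
    rw [h1, ← h2]
    simp only [ha, intervalIntegral.integral_neg]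
    ring
  have hm : ∫ x in (0:ℝ)..(2 * Real.pi), F x = Real.pi * F Real.pi := by
    have h1 : ∫ x in (0:ℝ)..(2 * Real.pi), F x =
        (∫ x in (0:ℝ)..Real.pi, F x) + ∫ x in (Real.pi)..(2 * Real.pi), F x :=
      (intervalIntegral.integral_add_adjacent_intervals (hFc.intervalIntegrable _ _)
        (hFc.intervalIntegrable _ _)).symm
    have h2 : ∫ x in (0:ℝ)..Real.pi, F (x + Real.pi) =
        ∫ x in (0 + Real.pi)..(Real.pi + Real.pi), F x :=
      intervalIntegral.integral_comp_add_right _ _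
    rw [zero_add, ← two_mul] at h2
    rw [h1, ← h2]
    simp only [hFa]
    rw [intervalIntegral.integral_sub (by simp) (hFc.intervalIntegrable _ _)]
    simp
  have hs : ∀ t, eulerPhi (n+1) t = F t - (1/2) * F Real.pi := by
    intro t
    have : eulerPhi (n+1) t = F t - (1 / (2 * Real.pi)) * ∫ x in (0:ℝ)..(2 * Real.pi), F x := rfl
    rw [this, hm]
    have := Real.pi_ne_zero
    field_simp
  refine ⟨hs, ?_, ?_⟩
  · rw [show eulerPhi (n+1) = fun t => F t - (1/2) * F Real.pi from funext hs]
    exact hFc.sub continuous_const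
  · intro t
    rw [hs, hs, hFa]; ring

lemma e_basic (n : ℕ) : (∀ a b, IntervalIntegrable (eulerPhi n) volume a b) ∧
    (∀ t, eulerPhi n (t + Real.pi) = - eulerPhi n t) := by
  induction n with
  | zero =>
    refine ⟨e0_int, fun t => ?_⟩
    change Real.sign (Real.sin _) = - Real.sign (Real.sin t)
    rw [Real.sin_add_pi, Real.sign_neg]
  | succ n ih =>
    obtain ⟨_, h2, h3⟩ := e_aux n ih.1 ih.2
    exact ⟨fun a b => h2.intervalIntegrable _ _, h3⟩

lemma e_succ (n : ℕ) (t : ℝ) : eulerPhi (n+1) t = (∫ x in (0:ℝ)..t, eulerPhi n x)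
      - (1/2) * ∫ x in (0:ℝ)..Real.pi, eulerPhi n x :=
  (e_aux n (e_basic n).1 (e_basic n).2).1 t

lemma e_cont (n : ℕ) : Continuous (eulerPhi (n+1)) :=
  (e_aux n (e_basic n).1 (e_basic n).2).2.1

lemma e_anti (n : ℕ) (t : ℝ) : eulerPhi n (t + Real.pi) = - eulerPhi n t := (e_basic n).2 t

lemma e_deriv (n : ℕ) (t : ℝ) : HasDerivAt (eulerPhi (n+2)) (eulerPhi (n+1) t) t := by
  rw [show eulerPhi (n+2) = fun t => _ from funext (e_succ (n+1))]
  exact ((e_cont n).integral_hasStrictDerivAt 0 t).hasDerivAt.sub_const _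

lemma e_one (t : ℝ) (h0 : 0 ≤ t) (h1 : t ≤ Real.pi) : eulerPhi 1 t = t - Real.pi / 2 := by
  have key : ∀ t, 0 ≤ t → t ≤ Real.pi → ∫ x in (0:ℝ)..t, eulerPhi 0 x = t := by
    intro t h0 h1
    have : ∫ x in (0:ℝ)..t, eulerPhi 0 x = ∫ x in (0:ℝ)..t, (1:ℝ) := by
      apply intervalIntegral.integral_congr_ae
      have : ∀ᵐ x : ℝ, x ≠ Real.pi := by simp [ae_iff]
      filter_upwards [this] with x hx hx2
      rw [Set.uIoc_of_le h0] at hx2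
      exact Real.sign_of_pos (Real.sin_pos_of_pos_of_lt_pi hx2.1
        (lt_of_le_of_ne (hx2.2.trans h1) hx))
    rw [this]; simp
  rw [e_succ, key t h0 h1, key _ Real.pi_pos.le le_rfl]; ring

lemma e_one_even (t : ℝ) : eulerPhi 1 (-t) = eulerPhi 1 t := by
  rw [e_succ, e_succ]
  congr 1
  have h := intervalIntegral.integral_comp_neg (a := 0) (b := t) (eulerPhi 0)
  have h2 : ∀ x, eulerPhi 0 (-x) = - eulerPhi 0 x := by
    intro x
    change Real.sign (Real.sin _) = - Real.sign (Real.sin x)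
    rw [Real.sin_neg, Real.sign_neg]
  simp only [h2, intervalIntegral.integral_neg, neg_zero] at h
  rw [intervalIntegral.integral_symm, ← h, neg_neg]

lemma e_one_lip (x y : ℝ) : |eulerPhi 1 x - eulerPhi 1 y| ≤ |x - y| := by
  have : eulerPhi 1 x - eulerPhi 1 y = ∫ u in y..x, eulerPhi 0 u := by
    rw [e_succ, e_succ, sub_sub_sub_cancel_right,
      intervalIntegral.integral_interval_sub_left (e0_int _ _) (e0_int _ _)]
  rw [this]
  have := intervalIntegral.norm_integral_le_of_norm_le_const (a := y) (b := x) (C := 1)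
    (f := eulerPhi 0) (fun u _ => e0_le u)
  simpa using this

/-- shifted spline with maximum at zero -/
noncomputable def Phi (n : ℕ) (t : ℝ) : ℝ := eulerPhi (n+1) (t + (n+2) * (Real.pi / 2))

lemma Phi_anti (n : ℕ) (t : ℝ) : Phi n (t + Real.pi) = - Phi n t := by
  unfold Phi
  rw [← e_anti]; congr 1; ring

lemma Phi_deriv (n : ℕ) (t : ℝ) : HasDerivAt (Phi (n+1)) (Phi n (t + Real.pi / 2)) t := by
  have h := (e_deriv n (t + ((n+1 : ℕ)+2) * (Real.pi / 2))).comp_add_const t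
    (((n+1 : ℕ)+2) * (Real.pi / 2))
  have e : Phi n (t + Real.pi / 2) = eulerPhi (n+1) (t + ((n+1 : ℕ)+2) * (Real.pi / 2)) := by
    unfold Phi
    congr 1; push_cast; ring
  rw [e]
  exact h

lemma Phi_cont (n : ℕ) : Continuous (Phi n) :=
  (e_cont n).comp (by fun_prop)

lemma Phi_even (n : ℕ) (t : ℝ) : Phi n (-t) = Phi n t := by
  induction n generalizing t with
  | zero =>
    unfold Phi
    have e : ∀ s : ℝ, s + ((0:ℕ) + 2) * (Real.pi / 2) = s + Real.pi := by intro s; push_cast; ring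
    rw [e, e, e_anti, e_anti, e_one_even]
  | succ n ih =>
    have hd : ∀ x, HasDerivAt (fun x => Phi (n+1) (-x) - Phi (n+1) x) 0 x := by
      intro x
      have h1 := (Phi_deriv n (-x)).scomp x (hasDerivAt_neg x)
      have h2 := h1.sub (Phi_deriv n x)
      have e : (0:ℝ) = (-1:ℝ) • Phi n (-x + Real.pi / 2) - Phi n (x + Real.pi / 2) := by
        have := Phi_anti n (x - Real.pi/2)
        rw [show x - Real.pi/2 + Real.pi = x + Real.pi/2 by ring] at this
        rw [this, ← ih (x - Real.pi / 2), show -(x - Real.pi/2) = -x + Real.pi/2 by ring]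
        simp
      rw [e]
      exact h2
    have := is_const_of_deriv_eq_zero (fun x => (hd x).differentiableAt) (fun x => (hd x).deriv) t 0
    simp at this
    linarith

lemma Phi_deriv' (n : ℕ) (t : ℝ) : HasDerivAt (Phi (n+1)) (-Phi n (Real.pi / 2 - t)) t := by
  have e : -Phi n (Real.pi / 2 - t) = Phi n (t + Real.pi / 2) := by
    rw [← Phi_even, ← Phi_anti]; congr 1; ring
  rw [e]; exact Phi_deriv n t

lemma Phi_half (n : ℕ) : Phi n (Real.pi / 2) = 0 := by
  have := Phi_anti n (-(Real.pi / 2))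
  rw [show -(Real.pi/2) + Real.pi = Real.pi/2 by ring, Phi_even] at this
  linarith

lemma Phi_zero (t : ℝ) (h0 : 0 ≤ t) (h1 : t ≤ Real.pi) : Phi 0 t = Real.pi / 2 - t := by
  unfold Phi
  rw [show t + ((0:ℕ) + 2) * (Real.pi / 2) = t + Real.pi by push_cast; ring, e_anti, e_one t h0 h1]
  ring

lemma Phi_strictAnti (n : ℕ) : StrictAntiOn (Phi n) (Set.Icc 0 Real.pi) := by
  induction n with
  | zero =>
    intro x hx y hy hxy
    rw [Phi_zero x hx.1 hx.2, Phi_zero y hy.1 hy.2]; linarith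
  | succ n ih =>
    apply strictAntiOn_of_deriv_neg (convex_Icc _ _) (Phi_cont _).continuousOn
    intro x hx
    rw [interior_Icc] at hx
    rw [(Phi_deriv' n x).deriv, neg_lt_zero]
    have pp := Real.pi_pos
    have key : ∀ s, 0 ≤ s → s < Real.pi / 2 → 0 < Phi n s := by
      intro s h0 h1
      rw [← Phi_half n]
      exact ih ⟨h0, by linarith⟩ ⟨by linarith, by linarith⟩ h1
    rcases le_total x (Real.pi / 2) with h | h
    · exact key _ (by linarith) (by linarith [hx.1])
    · rw [← Phi_even]
      exact key _ (by linarith) (by linarith [hx.2])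

lemma Phi_pos (n : ℕ) : 0 < Phi n 0 := by
  have pp := Real.pi_pos
  have h := Phi_strictAnti n (a := 0) (b := Real.pi / 2) ⟨le_rfl, pp.le⟩
    ⟨by linarith, by linarith⟩ (by linarith)
  rwa [Phi_half] at h

lemma Phi_le (n : ℕ) (t : ℝ) : |Phi n t| ≤ Phi n 0 := by
  have pp := Real.pi_pos
  have hper : Function.Antiperiodic (Phi n) Real.pi := Phi_anti n
  have hper : Function.Periodic (fun t => |Phi n t|) Real.pi := by
    intro t; simp only [Phi_anti, abs_neg]
  obtain ⟨s, hs, he⟩ := hper.exists_mem_Ico₀ pp t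
  rw [show |Phi n t| = |Phi n s| from he]
  have hs' : s ∈ Set.Icc 0 Real.pi := ⟨hs.1, hs.2.le⟩
  have h1 := (Phi_strictAnti n).antitoneOn ⟨le_rfl, pp.le⟩ hs' hs.1
  have h2 := (Phi_strictAnti n).antitoneOn hs' ⟨pp.le, le_rfl⟩ hs.2.le
  have h3 := Phi_anti n 0
  rw [zero_add] at h3
  rw [abs_le]; constructor <;> linarith

lemma unif_e (n : ℕ) : unif (eulerPhi (n+1)) = Phi n 0 := by
  unfold unif
  have hb : ∀ t, |eulerPhi (n+1) t| ≤ Phi n 0 := by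
    intro t
    have := Phi_le n (t - (n+2) * (Real.pi / 2))
    unfold Phi at this ⊢
    rwa [sub_add_cancel] at this
  apply le_antisymm
  · exact ciSup_le hb
  · refine le_trans (le_abs_self _) (le_ciSup (f := fun t => |eulerPhi (n+1) t|)
      ⟨_, by rintro _ ⟨t, rfl⟩; exact hb t⟩ (0 + (n+2) * (Real.pi / 2)))

/-- `W n` is the class of functions whose `n`-th derivative is 1-Lipschitz. -/
def WW : ℕ → (ℝ → ℝ) → Prop
  | 0 => fun f => ∀ x y, |f x - f y| ≤ |x - y|
  | (n+1) => fun f => ∃ g : ℝ → ℝ, (∀ x, HasDerivAt f (g x) x) ∧ WW n g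

lemma WW_neg (n : ℕ) (f : ℝ → ℝ) (h : WW n f) : WW n (fun x => - f x) := by
  induction n generalizing f with
  | zero =>
    intro x y
    rw [show -f x - -f y = -(f x - f y) by ring, abs_neg]; exact h x y
  | succ n ih =>
    obtain ⟨g, hg, hw⟩ := h
    exact ⟨fun x => - g x, fun x => (hg x).neg, ih g hw⟩

lemma hasDerivAt_refl {f g : ℝ → ℝ} (hg : ∀ x, HasDerivAt f (g x) x) (x : ℝ) :
    HasDerivAt (fun x => f (-x)) (-g (-x)) x := by
  have := (hg (-x)).scomp x (hasDerivAt_neg x)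
  rw [neg_smul, one_smul] at this
  exact this

lemma WW_refl (n : ℕ) (f : ℝ → ℝ) (h : WW n f) : WW n (fun x => f (-x)) := by
  induction n generalizing f with
  | zero =>
    intro x y
    refine (h (-x) (-y)).trans (le_of_eq ?_)
    rw [show -x - -y = -(x - y) by ring, abs_neg]
  | succ n ih =>
    obtain ⟨g, hg, hw⟩ := h
    exact ⟨fun x => - g (-x), hasDerivAt_refl hg, WW_neg n _ (ih g hw)⟩

lemma lip_of_deriv {f g : ℝ → ℝ} (hg : ∀ x, HasDerivAt f (g x) x) (C : ℝ) (hC : ∀ x, |g x| ≤ C)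
    (x y : ℝ) : |f x - f y| ≤ C * |x - y| := by
  have := Convex.norm_image_sub_le_of_norm_hasDerivWithin_le (f := f) (f' := g) (s := Set.univ)
    (C := C) (x := y) (y := x) (fun x _ => (hg x).hasDerivWithinAt) (fun x _ => hC x) convex_univ
    trivial trivial
  simpa using this

lemma WW_diff (n : ℕ) (f : ℝ → ℝ) (h : WW (n+1) f) (s : ℝ) (h0 : 0 ≤ s) (h1 : s ≤ 1) :
    WW n (fun x => f (x + s) - f x) := by
  induction n generalizing f with
  | zero =>
    obtain ⟨g, hg, hw⟩ := h
    intro x y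
    have := lip_of_deriv (f := fun x => f (x + s) - f x) (g := fun x => g (x + s) - g x)
      (fun x => ((hg (x+s)).comp_add_const x s).sub (hg x)) 1 (fun x => by
        refine (hw _ _).trans ?_
        rw [show x + s - x = s by ring, abs_of_nonneg h0]; exact h1) x y
    simpa using this
  | succ n ih =>
    obtain ⟨g, hg, hw⟩ := h
    exact ⟨fun x => g (x+s) - g x, fun x => ((hg (x+s)).comp_add_const x s).sub (hg x), ih g hw⟩

lemma bdd_deriv (n : ℕ) : ∀ C : ℝ, ∃ C' : ℝ, ∀ f g : ℝ → ℝ, (∀ x, HasDerivAt f (g x) x) → WW n g →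
    (∀ x, |f x| ≤ C) → ∀ x, |g x| ≤ C' := by
  have mv : ∀ C : ℝ, ∀ f g : ℝ → ℝ, (∀ x, HasDerivAt f (g x) x) → (∀ x, |f x| ≤ C) → ∀ x,
      ∃ s, 0 ≤ s ∧ s ≤ 1 ∧ |g (x + s)| ≤ 2 * C := by
    intro C f g hg hC x
    obtain ⟨c, hc, he⟩ := exists_hasDerivAt_eq_slope f g (show x < x + 1 by linarith)
      (fun y _ => (hg y).continuousAt.continuousWithinAt) (fun y _ => hg y)
    refine ⟨c - x, by linarith [hc.1], by linarith [hc.2], ?_⟩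
    rw [show x + (c - x) = c by ring, he]
    have a1 := abs_le.1 (hC x)
    have a2 := abs_le.1 (hC (x+1))
    rw [show x + 1 - x = 1 by ring, div_one, abs_le]
    constructor <;> linarith
  induction n with
  | zero =>
    intro C
    refine ⟨2 * C + 1, fun f g hg hw hC x => ?_⟩
    obtain ⟨s, h0, h1, h2⟩ := mv C f g hg hC x
    have h3 := hw (x + s) x
    rw [show x + s - x = s by ring, abs_of_nonneg h0] at h3
    rw [abs_le] at *
    constructor <;> linarith
  | succ n ih =>
    intro C
    obtain ⟨C', hC'⟩ := ih (2 * C)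
    refine ⟨2 * C + C', fun f g hg hw hC x => ?_⟩
    obtain ⟨s, h0, h1, h2⟩ := mv C f g hg hC x
    have h3 := hC' (fun x => f (x + s) - f x) (fun x => g (x + s) - g x)
      (fun x => ((hg (x+s)).comp_add_const x s).sub (hg x)) (WW_diff n g hw s h0 h1)
      (fun x => by
        have a1 := abs_le.1 (hC x)
        have a2 := abs_le.1 (hC (x+s))
        rw [abs_le]
        constructor <;> linarith) x
    rw [abs_le] at *
    constructor <;> linarith

/-- scaled spline -/
noncomputable def PA (a : ℝ) (n : ℕ) (t : ℝ) : ℝ := a ^ (n+1) * Phi n (t / a)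

lemma PA_deriv (a : ℝ) (ha : 0 < a) (n : ℕ) (t : ℝ) :
    HasDerivAt (PA a (n+1)) (- PA a n (a * (Real.pi / 2) - t)) t := by
  have h := ((Phi_deriv' n (t / a)).scomp t ((hasDerivAt_id t).div_const a)).const_mul (a^(n+1+1))
  have e : - PA a n (a * (Real.pi / 2) - t) =
      a ^ (n+1+1) * ((1 / a) • (-Phi n (Real.pi / 2 - t / a))) := by
    unfold PA
    rw [show (a * (Real.pi / 2) - t) / a = Real.pi / 2 - t / a by field_simp]
    simp only [smul_eq_mul]
    field_simp
    ring
  rw [e]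
  exact h

lemma PA_cont (a : ℝ) (n : ℕ) : Continuous (PA a n) := by
  have := Phi_cont n
  unfold PA
  fun_prop

lemma PA_zero (a : ℝ) (n : ℕ) : PA a n 0 = a ^ (n+1) * Phi n 0 := by simp [PA]

lemma PA_half (a : ℝ) (ha : 0 < a) (n : ℕ) : PA a n (a * (Real.pi / 2)) = 0 := by
  unfold PA
  rw [mul_div_cancel_left₀ _ ha.ne', Phi_half, mul_zero]

lemma PA_lt (a : ℝ) (ha : 0 < a) (n : ℕ) (t : ℝ) (h0 : 0 < t) (h1 : t ≤ a * (Real.pi / 2)) :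
    PA a n t < PA a n 0 := by
  have pp := Real.pi_pos
  unfold PA
  have h2 : t / a ≤ Real.pi / 2 := by rw [div_le_iff₀ ha]; linarith
  have h3 : 0 < t / a := by positivity
  apply mul_lt_mul_of_pos_left _ (by positivity)
  rw [zero_div]
  exact Phi_strictAnti n ⟨le_rfl, pp.le⟩ ⟨h3.le, by linarith⟩ h3

lemma mono_of_deriv {G G' : ℝ → ℝ} {a b : ℝ} (hab : a ≤ b) (hG : ∀ x, HasDerivAt G (G' x) x)
    (h : ∀ x, a ≤ x → x ≤ b → 0 ≤ G' x) : G a ≤ G b := by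
  have := monotoneOn_of_deriv_nonneg (convex_Icc a b) (f := G)
    (fun y _ => (hG y).continuousAt.continuousWithinAt)
    (fun y _ => (hG y).differentiableAt.differentiableWithinAt) (fun x hx => by
      rw [interior_Icc] at hx
      rw [(hG x).deriv]; exact h x hx.1.le hx.2.le)
  exact this ⟨le_rfl, hab⟩ ⟨hab, le_rfl⟩ hab

/-- Comparison property on half-humps. -/
def QQ (n : ℕ) : Prop := ∀ a : ℝ, 0 < a → ∀ f : ℝ → ℝ, WW n f → (∀ x, |f x| ≤ PA a n 0) →
  ∀ ξ η : ℝ, 0 ≤ η → η ≤ a * (Real.pi / 2) → PA a n η < f ξ →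
  ∀ t, 0 ≤ t → t ≤ a * (Real.pi / 2) - η → PA a n (η + t) ≤ f (ξ + t)

lemma hasDerivAt_add_left {f g : ℝ → ℝ} (hg : ∀ x, HasDerivAt f (g x) x) (c x : ℝ) :
    HasDerivAt (fun x => f (c + x)) (g (c + x)) x := (hg (c + x)).comp_const_add c x

lemma hasDerivAt_sub_left {f g : ℝ → ℝ} (hg : ∀ x, HasDerivAt f (g x) x) (c x : ℝ) :
    HasDerivAt (fun x => f (c - x)) (- g (c - x)) x := (hg (c - x)).comp_const_sub c x

/-- reflected version -/
lemma QQ_left {n : ℕ} (hQ : QQ n) (a : ℝ) (ha : 0 < a) (f : ℝ → ℝ) (hf : WW n f)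
    (hb : ∀ x, |f x| ≤ PA a n 0) (ξ η : ℝ) (h0 : 0 ≤ η) (h1 : η ≤ a * (Real.pi / 2))
    (h : PA a n η < f ξ) (t : ℝ) (ht : 0 ≤ t) (ht' : t ≤ a * (Real.pi / 2) - η) :
    PA a n (η + t) ≤ f (ξ - t) := by
  have := hQ a ha (fun x => f (-x)) (WW_refl n f hf) (fun x => hb _) (-ξ) η h0 h1 (by simpa using h)
    t ht ht'
  rwa [show -(-ξ + t) = ξ - t by ring] at this

/-- Landau-Kolmogorov for the first derivative. -/
lemma step1 {n : ℕ} (hQ : QQ n) (a : ℝ) (ha : 0 < a) (f g : ℝ → ℝ)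
    (hg : ∀ x, HasDerivAt f (g x) x) (hw : WW n g) (hb : ∀ x, |f x| ≤ PA a (n+1) 0) (x : ℝ) :
    |g x| ≤ PA a n 0 := by
  by_contra hx
  push Not at hx
  have pp := Real.pi_pos
  obtain ⟨C, hC⟩ := bdd_deriv n (PA a (n+1) 0)
  have hC := hC f g hg hw hb
  have hbdd : BddAbove (Set.range fun t => |g t|) := ⟨C, by rintro _ ⟨t, rfl⟩; exact hC t⟩
  set m : ℝ := ⨆ t, |g t| with hm
  have hle : ∀ t, |g t| ≤ m := fun t => le_ciSup hbdd t
  have hm1 : PA a n 0 < m := hx.trans_le (hle x)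
  have hN := Phi_pos n
  rw [PA_zero] at hm1
  obtain ⟨b, hb0, hbm⟩ : ∃ b : ℝ, 0 < b ∧ b ^ (n+1) * Phi n 0 = m := by
    have mpos : 0 < m := lt_trans (by positivity) hm1
    refine ⟨(m / Phi n 0) ^ ((1:ℝ) / ((n+1 : ℕ) : ℝ)), by positivity, ?_⟩
    rw [one_div, Real.rpow_inv_natCast_pow (by positivity) (by omega)]
    field_simp
  have hab : a < b := by
    rw [← hbm] at hm1
    exact lt_of_pow_lt_pow_left₀ (n+1) hb0.le (lt_of_mul_lt_mul_right hm1 hN.le)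
  have hgb : ∀ t, |g t| ≤ PA b n 0 := by
    intro t; rw [PA_zero, hbm]; exact hle t
  set T := b * (Real.pi / 2) with hT
  have hTpos : 0 < T := by positivity
  have key : ∀ η, 0 < η → η < T → PA b (n+1) 0 - PA b (n+1) (T - η) ≤ PA a (n+1) 0 := by
    intro η h0 h1
    have hlt : PA b n η < m := by
      rw [← hbm, ← PA_zero]; exact PA_lt b hb0 n η h0 h1.le
    obtain ⟨ξ, hξ⟩ := exists_lt_of_lt_ciSup hlt
    have main : ∀ f g : ℝ → ℝ, (∀ x, HasDerivAt f (g x) x) → WW n g →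
        (∀ x, |f x| ≤ PA a (n+1) 0) → (∀ t, |g t| ≤ PA b n 0) → PA b n η < g ξ →
        PA b (n+1) 0 - PA b (n+1) (T - η) ≤ PA a (n+1) 0 := by
      intro f g hg hw hb hgb hξ
      have := mono_of_deriv (a := 0) (b := T - η)
        (G := fun t => f (ξ + t) - f (ξ - t) - 2 * PA b (n+1) (T - η - t))
        (G' := fun t => g (ξ + t) - (- g (ξ - t)) - 2 * (- (- PA b n (T - (T - η - t)))))
        (by linarith)
        (fun x => ((hasDerivAt_add_left hg ξ x).sub (hasDerivAt_sub_left hg ξ x)).sub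
          ((hasDerivAt_sub_left (PA_deriv b hb0 n) (T - η) x).const_mul 2))
        (fun t t0 t1 => by
          have e1 := hQ b hb0 g hw hgb ξ η h0.le h1.le hξ t t0 t1
          have e2 := QQ_left hQ b hb0 g hw hgb ξ η h0.le h1.le hξ t t0 t1
          rw [show T - (T - η - t) = η + t by ring]
          linarith)
      simp only [add_zero, sub_zero, sub_self] at this
      have a1 := abs_le.1 (hb (ξ + (T - η)))
      have a2 := abs_le.1 (hb (ξ - (T - η)))
      linarith
    rcases abs_cases (g ξ) with h | h
    · exact main f g hg hw hb hgb (by rw [← h.1]; exact hξ)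
    · exact main (fun x => - f x) (fun x => - g x) (fun x => (hg x).neg) (WW_neg n g hw)
        (fun x => by rw [abs_neg]; exact hb x) (fun x => by rw [abs_neg]; exact hgb x)
        (by rw [← h.1]; exact hξ)
  have hlim : Tendsto (fun η => PA b (n+1) 0 - PA b (n+1) (T - η)) (nhdsWithin 0 (Set.Ioi 0))
      (nhds (PA b (n+1) 0 - PA b (n+1) (T - 0))) := by
    have hc := PA_cont b (n+1)
    have : Continuous (fun η => PA b (n+1) 0 - PA b (n+1) (T - η)) := by fun_prop
    exact this.continuousAt.tendsto.mono_left nhdsWithin_le_nhds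
  have hfin := le_of_tendsto hlim (b := PA a (n+1) 0) (by
    filter_upwards [Ioo_mem_nhdsGT hTpos] with η hη
    exact key η hη.1 hη.2)
  rw [sub_zero, PA_half b hb0, sub_zero, PA_zero, PA_zero] at hfin
  have := le_of_mul_le_mul_right hfin (Phi_pos (n+1))
  exact absurd (lt_of_le_of_lt this (pow_lt_pow_left₀ hab ha.le (by omega))) (lt_irrefl _)

lemma first_zero {G : ℝ → ℝ} (hG : Continuous G) {t1 : ℝ} (h0 : 0 < G 0) (ht : 0 ≤ t1)
    (h1 : G t1 < 0) : ∃ s, 0 < s ∧ s ≤ t1 ∧ G s = 0 ∧ ∀ x, 0 ≤ x → x < s → 0 < G x := by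
  set S := Set.Icc 0 t1 ∩ G ⁻¹' (Set.Iic 0) with hS
  have hc : IsClosed S := isClosed_Icc.inter (isClosed_Iic.preimage hG)
  have hne : S.Nonempty := ⟨t1, ⟨ht, le_rfl⟩, h1.le⟩
  have hbb : BddBelow S := ⟨0, fun x hx => hx.1.1⟩
  have hm := hc.csInf_mem hne hbb
  set s := sInf S
  have hpos : ∀ x, 0 ≤ x → x < s → 0 < G x := by
    intro x hx0 hxs
    by_contra hcon
    exact absurd (csInf_le hbb (show x ∈ S from ⟨⟨hx0, hxs.le.trans hm.1.2⟩, not_lt.1 hcon⟩))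
      (not_le.2 hxs)
  have hs0 : 0 < s := by
    rcases hm.1.1.lt_or_eq with h | h
    · exact h
    · have h2 : G s ≤ 0 := hm.2
      rw [← h] at h2; linarith
  refine ⟨s, hs0, hm.1.2, le_antisymm hm.2 ?_, hpos⟩
  have : Tendsto G (nhdsWithin s (Set.Iio s)) (nhds (G s)) :=
    hG.continuousAt.tendsto.mono_left nhdsWithin_le_nhds
  refine ge_of_tendsto this ?_
  filter_upwards [Ioo_mem_nhdsLT hs0] with x hx
  exact (hpos x hx.1.le hx.2).le

lemma step2 {n : ℕ} (hQ : QQ n) : QQ (n+1) := by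
  intro a ha f hf hb ξ η h0 h1 hlt t1 ht0 ht1
  have hf' := hf
  obtain ⟨g, hg, hw⟩ := hf
  have hgb := step1 hQ a ha f g hg hw hb
  by_contra hcon
  push Not at hcon
  set T := a * (Real.pi / 2) with hT
  have hfc : Continuous f := continuous_iff_continuousAt.2 fun x => (hg x).continuousAt
  have hpc := PA_cont a (n+1)
  have hGd : ∀ x, HasDerivAt (fun t => f (ξ + t) - PA a (n+1) (η + t))
      (g (ξ + x) - (- PA a n (T - (η + x)))) x := fun x =>
    (hasDerivAt_add_left hg ξ x).sub (hasDerivAt_add_left (PA_deriv a ha n) η x)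
  obtain ⟨s, s0, s1, hs, hpos⟩ := first_zero (G := fun t => f (ξ + t) - PA a (n+1) (η + t))
    (t1 := t1) (by fun_prop) (by simpa using hlt) ht0 (by simpa using hcon)
  obtain ⟨t2, ht2, he⟩ := exists_hasDerivAt_eq_slope (fun t => f (ξ + t) - PA a (n+1) (η + t)) _ s0
    (by fun_prop) (fun x _ => hGd x)
  have hneg : g (ξ + t2) - (- PA a n (T - (η + t2))) < 0 := by
    rw [he, hs]
    apply div_neg_of_neg_of_pos
    · have := hpos 0 le_rfl s0
      linarith
    · linarith
  have hp2 := hpos t2 ht2.1.le ht2.2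
  set η2 := η + t2 with hη2
  have hη2pos : 0 < η2 := by linarith [ht2.1]
  have hη2T : η2 < T := by linarith [ht2.2]
  have hmon := mono_of_deriv (a := 0) (b := η2)
    (G := fun t => f (ξ + t2 - t) - PA a (n+1) (η2 - t))
    (G' := fun t => - g (ξ + t2 - t) - (- (- PA a n (T - (η2 - t)))))
    hη2pos.le
    (fun x => (hasDerivAt_sub_left hg _ x).sub (hasDerivAt_sub_left (PA_deriv a ha n) η2 x))
    (fun t t0 t1 => by
      have := QQ_left hQ a ha (fun x => - g x) (WW_neg n g hw)
        (fun x => by rw [abs_neg]; exact hgb x) (ξ + t2) (T - η2) (by linarith) (by linarith)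
        (by linarith) t t0 (by linarith)
      rw [show T - (η2 - t) = T - η2 + t by ring]
      linarith)
  simp only [sub_zero, sub_self] at hmon
  have := abs_le.1 (hb (ξ + t2 - η2))
  linarith

lemma QQ_all (n : ℕ) : QQ n := by
  induction n with
  | zero =>
    intro a ha f hf hb ξ η h0 h1 hlt t ht0 ht1
    have pp := Real.pi_pos
    have e : ∀ s, 0 ≤ s → s ≤ a * (Real.pi / 2) → PA a 0 s = a * (Real.pi / 2) - s := by
      intro s hs0 hs1
      have h2 : s / a ≤ Real.pi / 2 := by rw [div_le_iff₀ ha]; linarith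
      unfold PA
      rw [Phi_zero _ (by positivity) (by linarith)]
      field_simp
      simp
    rw [e η h0 h1] at hlt
    rw [e _ (by linarith) (by linarith)]
    have := hf (ξ + t) ξ
    rw [show ξ + t - ξ = t by ring, abs_of_nonneg ht0] at this
    have := abs_le.1 this
    linarith
  | succ n ih => exact step2 ih

/-- Kolmogorov's inequality -/
lemma kolm (k n : ℕ) (a : ℝ) (ha : 0 < a) (f : ℝ → ℝ) (hf : WW (n+k) f)
    (hb : ∀ x, |f x| ≤ PA a (n+k) 0) (x : ℝ) : |iteratedDeriv k f x| ≤ PA a n 0 := by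
  induction k generalizing f with
  | zero => simpa using hb x
  | succ k ih =>
    obtain ⟨g, hg, hw⟩ := hf
    rw [iteratedDeriv_succ', show deriv f = g from funext fun x => (hg x).deriv]
    exact ih g hw (step1 (QQ_all _) a ha f g hg hw hb)

lemma toWW (n : ℕ) (f : ℝ → ℝ) (hf : ContDiff ℝ n f)
    (hl : ∀ x y, |iteratedDeriv n f x - iteratedDeriv n f y| ≤ |x - y|) : WW n f := by
  induction n generalizing f with
  | zero =>
    simp only [iteratedDeriv_zero] at hl
    exact hl
  | succ n ih =>
    have h := contDiff_succ_iff_deriv.1 (show ContDiff ℝ ((n : WithTop ℕ∞) + 1) f by exact_mod_cast hf)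
    refine ⟨deriv f, fun x => (h.1 x).hasDerivAt, ih _ h.2.2 ?_⟩
    rwa [iteratedDeriv_succ'] at hl

lemma lip1 (g : ℝ → ℝ) (K : NNReal) (hK : LipschitzWith K g) (h : unif (deriv g) ≤ 1) (x y : ℝ) :
    |g x - g y| ≤ |x - y| := by
  have hd : ∀ t, |deriv g t| ≤ 1 := fun t =>
    (le_ciSup (f := fun t => |deriv g t|) ⟨K, by
      rintro _ ⟨t, rfl⟩; exact norm_deriv_le_of_lipschitz hK⟩ t).trans h
  rw [← (hK.lipschitzOnWith (s := Set.uIcc y x)).absolutelyContinuousOnInterval.integral_deriv_eq_sub]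
  have := intervalIntegral.norm_integral_le_of_norm_le_const (a := y) (b := x) (C := 1)
    (f := deriv g) (fun u _ => hd u)
  simpa using this

/-- scaled Euler spline -/
noncomputable def EA (a : ℝ) (n : ℕ) (t : ℝ) : ℝ := a ^ n * eulerPhi n (t / a)

lemma EA_deriv (a : ℝ) (ha : 0 < a) (n : ℕ) (t : ℝ) :
    HasDerivAt (EA a (n+2)) (EA a (n+1) t) t := by
  have h := ((e_deriv n (t / a)).scomp t ((hasDerivAt_id t).div_const a)).const_mul (a^(n+2))
  have e : EA a (n+1) t = a ^ (n+2) * ((1 / a) • eulerPhi (n+1) (t / a)) := by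
    unfold EA
    simp only [smul_eq_mul]
    field_simp
    ring
  rw [e]
  exact h

lemma EA_iter (a : ℝ) (ha : 0 < a) (k n : ℕ) : iteratedDeriv k (EA a (n+1+k)) = EA a (n+1) := by
  induction k with
  | zero => simp
  | succ k ih =>
    rw [iteratedDeriv_succ', show deriv (EA a (n+1+(k+1))) = EA a (n+1+k) from ?_, ih]
    funext t
    have := (EA_deriv a ha (n+k) t).deriv
    rwa [show n+k+2 = n+1+(k+1) by ring, show n+k+1 = n+1+k by ring] at this

lemma EA_contDiff (a : ℝ) (ha : 0 < a) (n : ℕ) : ContDiff ℝ n (EA a (n+1)) := by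
  induction n with
  | zero =>
    have : Continuous (EA a 1) := by
      have := e_cont 0
      unfold EA
      fun_prop
    simpa using this
  | succ n ih =>
    have : ContDiff ℝ ((n : WithTop ℕ∞) + 1) (EA a (n+1+1)) := by
      refine contDiff_succ_iff_deriv.2 ⟨fun t => (EA_deriv a ha n t).differentiableAt, by simp, ?_⟩
      rwa [show deriv (EA a (n+1+1)) = EA a (n+1) from funext fun t => (EA_deriv a ha n t).deriv]
    exact_mod_cast this

lemma e_le (n : ℕ) (t : ℝ) : |eulerPhi (n+1) t| ≤ Phi n 0 := by
  have := Phi_le n (t - (n+2) * (Real.pi / 2))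
  unfold Phi at this ⊢
  rwa [sub_add_cancel] at this

lemma EA_le (a : ℝ) (ha : 0 < a) (n : ℕ) (t : ℝ) : |EA a (n+1) t| ≤ PA a n 0 := by
  unfold EA
  rw [PA_zero, abs_mul, abs_of_pos (by positivity)]
  exact mul_le_mul_of_nonneg_left (e_le n _) (by positivity)

lemma unif_EA (a : ℝ) (ha : 0 < a) (n : ℕ) : unif (EA a (n+1)) = PA a n 0 := by
  apply le_antisymm
  · exact ciSup_le (EA_le a ha n)
  · refine le_trans (le_of_eq ?_) ((le_abs_self _).trans
      (le_ciSup (f := fun t => |EA a (n+1) t|)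
      ⟨_, by rintro _ ⟨t, rfl⟩; exact EA_le a ha n t⟩ (a * (0 + (n+2) * (Real.pi / 2)))))
    unfold EA
    rw [PA_zero, mul_div_cancel_left₀ _ ha.ne']
    rfl

lemma EA_lip (a : ℝ) (ha : 0 < a) : LipschitzWith 1 (EA a 1) := by
  apply LipschitzWith.of_dist_le_mul
  intro x y
  rw [Real.dist_eq, Real.dist_eq]
  unfold EA
  rw [pow_one, ← mul_sub, abs_mul, abs_of_pos ha]
  refine (mul_le_mul_of_nonneg_left (e_one_lip _ _) ha.le).trans (le_of_eq ?_)
  rw [← sub_div, abs_div, abs_of_pos ha]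
  simp only [NNReal.coe_one]
  field_simp

lemma main_eq (k n : ℕ) (a : ℝ) (ha : 0 < a) :
    omegaMod k {f : ℝ → ℝ | MemL (n+1+k) f ∧ M (n+1+k) f ≤ 1} (PA a (n+k) 0) = PA a n 0 := by
  unfold omegaMod
  apply IsGreatest.csSup_eq
  have hr : n + 1 + k - 1 = n + k := by omega
  have hr' : n + 1 + k = n + k + 1 := by omega
  constructor
  · refine ⟨EA a (n+1+k), ⟨⟨?_, ?_, ?_, ?_⟩, ?_⟩, ?_, ?_⟩
    · rw [hr']; exact (EA_contDiff a ha (n+k)).continuous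
    · rw [hr']; exact ⟨_, EA_le a ha _⟩
    · rw [hr, hr']; exact EA_contDiff a ha (n+k)
    · refine ⟨1, ?_⟩
      rw [hr, show n + 1 + k = 0 + 1 + (n + k) by omega, EA_iter a ha]
      exact EA_lip a ha
    · unfold M
      rw [hr', iteratedDeriv_succ, show n + k + 1 = 0 + 1 + (n + k) by omega, EA_iter a ha]
      exact ciSup_le fun t => norm_deriv_le_of_lipschitz (EA_lip a ha)
    · unfold M
      rw [iteratedDeriv_zero, hr', unif_EA a ha]
    · unfold M
      rw [EA_iter a ha, unif_EA a ha]
  · rintro _ ⟨f, ⟨⟨_, ⟨C, hC⟩, hc, K, hK⟩, hM⟩, h0, rfl⟩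
    rw [hr] at hc hK
    rw [hr'] at hM
    unfold M at *
    rw [iteratedDeriv_succ] at hM
    rw [iteratedDeriv_zero] at h0
    apply ciSup_le
    refine kolm k n a ha f (toWW _ f hc (lip1 _ K hK hM)) ?_
    intro x
    exact (le_ciSup (f := fun t => |f t|) ⟨C, by rintro _ ⟨t, rfl⟩; exact hC t⟩ x).trans h0

/-- The modulus of continuity of `D^k` on `W^r_{∞,∞} = {f ∈ L^r_{∞,∞} : M_r(f) ≤ 1}`:
`ω(D^k, W^r_{∞,∞}; δ) = (‖φ_{r-k}‖ / ‖φ_r‖^{1-k/r}) δ^{1-k/r}` for every `δ > 0`. -/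
theorem stmt5 (k r : ℕ) (hk : 0 < k) (hkr : k < r) (δ : ℝ) (hδ : 0 < δ) :
    omegaMod k {f : ℝ → ℝ | MemL r f ∧ M r f ≤ 1} δ =
      (unif (eulerPhi (r - k)) / (unif (eulerPhi r)) ^ (1 - (k:ℝ)/(r:ℝ))) *
        δ ^ (1 - (k:ℝ)/(r:ℝ)) := by
  obtain ⟨n, rfl⟩ : ∃ n, r = n + 1 + k := ⟨r - k - 1, by omega⟩
  have hN := Phi_pos n
  have hR := Phi_pos (n+k)
  rw [show n + 1 + k - k = n + 1 by omega, unif_e,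
    show unif (eulerPhi (n+1+k)) = Phi (n+k) 0 by rw [← unif_e]; congr 2; omega]
  set N := Phi (n+k) 0
  have hr0 : ((n+1+k : ℕ) : ℝ) ≠ 0 := by positivity
  set a : ℝ := (δ / N) ^ ((1:ℝ) / ((n+1+k : ℕ) : ℝ)) with ha
  have hapos : 0 < a := by positivity
  have hδa : PA a (n+k) 0 = δ := by
    rw [PA_zero, ha, one_div, show n + k + 1 = n + 1 + k by omega,
      Real.rpow_inv_natCast_pow (by positivity) (by omega)]
    exact div_mul_cancel₀ _ hR.ne'
  have h := main_eq k n a hapos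
  rw [hδa] at h
  rw [h, PA_zero, ha, ← Real.rpow_natCast, ← Real.rpow_mul (by positivity),
    show (1:ℝ) / ((n+1+k : ℕ) : ℝ) * ((n+1 : ℕ) : ℝ) = 1 - (k:ℝ) / ((n+1+k : ℕ) : ℝ) by
      field_simp; push_cast; ring,
    Real.div_rpow hδ.le hR.le]
  ring
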